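/- Let S (steps) and U (users) be finite sets, let Â ⊆ U × S be an authorization policy, let C be a set of unordered pairs {s, s'} of distinct steps (separation-of-duty constraints), and let τ ∈ ℕ. Suppose A ⊆ Â is an authorization relation such that |A(s)| ≥ τ + 1 for every s ∈ S and A(s) ∩ A(s') = ∅ for every {s, s'} ∈ C. Then for every set T ⊆ U with |T| ≤ τ there exists a function π : S → U such that for every s ∈ S, π(s) ∈ A(s) and π(s) ∉ T (in particular (π(s), s) ∈ Â), and π(s) ≠ π(s') for every {s, s'} ∈ C. -/

import Mathlib

open Finset

namespace APEP

variable {S U : Type*} [Fintype S] [Fintype U] [DecidableEq S] [DecidableEq U]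

/-- The set of users authorized for step `s` by `A`. -/
def ares (A : Finset (U × S)) (s : S) : Finset U := univ.filter (fun u => (u, s) ∈ A)

theorem resilient_extended_plan
    (Ahat A : Finset (U × S))
    -- SoD constraints: unordered pairs of distinct steps, represented as ordered pairs
    (Cst : Finset (S × S)) (hdist : ∀ p ∈ Cst, p.1 ≠ p.2)
    (τ : ℕ)
    (hsub : A ⊆ Ahat)
    (hcard : ∀ s : S, τ + 1 ≤ (ares A s).card)
    (hsod : ∀ p ∈ Cst, (ares A p.1) ∩ (ares A p.2) = ∅) :
    ∀ T : Finset U, T.card ≤ τ →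
      ∃ π : S → U,
        (∀ s : S, π s ∈ ares A s ∧ π s ∉ T ∧ (π s, s) ∈ Ahat) ∧
        ∀ p ∈ Cst, π p.1 ≠ π p.2 := by
  intro T hT
  have h : ∀ s : S, ∃ u, u ∈ ares A s ∧ u ∉ T := fun s =>
    Finset.exists_mem_notMem_of_card_lt_card
      (lt_of_le_of_lt hT (Nat.lt_of_succ_le (hcard s)))
  choose π hA hπT using h
  refine ⟨π, fun s => ⟨hA s, hπT s, hsub ?_⟩, fun p hp he => ?_⟩
  · have := hA s
    simpa [ares] using this
  · have hm : π p.1 ∈ ares A p.1 ∩ ares A p.2 :=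
      Finset.mem_inter.mpr ⟨hA p.1, he ▸ hA p.2⟩
    rw [hsod p hp] at hm
    exact absurd hm (Finset.notMem_empty _)

end APEP
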